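/- arXiv:math/0512449 — 5 statements merged into one kernel-verified Lean document; each statement's English description precedes it below -/
import Mathlib

section
/- Let K be a field and let u1, v1, u2, v2 ∈ K[t] be polynomials with v1 ≠ 0, v2 ≠ 0, gcd(u1, v1) = 1 and gcd(u2, v2) = 1. Let F ∈ K[x,y] be an irreducible bivariate polynomial such that F(u1(t)/v1(t), u2(t)/v2(t)) = 0 in the field K(t) of rational functions, and suppose the parametrization is proper, i.e., the subfield of K(t) generated over K by u1/v1 and u2/v2 is all of K(t). Then the degree of F in the variable y equals max(deg u1, deg v1), and the degree of F in the variable x equals max(deg u2, deg v2). -/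
/-!
Write `x = u₁/v₁` and `y = u₂/v₂` in `K(t)`. If `x` is transcendental over `K`, then by Gauss's
lemma `F(x, Y)` stays irreducible over `K(x)`, so it is the minimal polynomial of `y` up to a unit
and `deg_y F = [K(x, y) : K(x)]`. Multiplying by the tracing index `[K(t) : K(x, y)]`, which is `1`
for a proper parametrization, gives `[K(t) : K(x)] = max (deg u₁) (deg v₁)`. If instead `x` is a
constant `c`, then `y` is transcendental, so `X - c` divides `F` and `deg_y F = 0`. Exchanging the
roles of `x` and `y` gives the degree in the other variable.
-/

open IntermediateField Polynomial
open scoped Polynomial.Bivariate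

section Bivariate

variable {R A B : Type*} [CommSemiring R] [CommSemiring A] [CommSemiring B]
  [Algebra R A] [Algebra R B] [Algebra A B] [IsScalarTower R A B]

theorem aevalAeval_algebraMap_eq_aeval_map_aeval (a : A) (b : B) (G : R[X][Y]) :
    G.aevalAeval (algebraMap A B a) b = aeval b (G.map (aeval a).toRingHom) := by
  induction G using Polynomial.induction_on' with
  | add p q hp hq => simp_all
  | monomial n p => simp [← C_mul_X_pow_eq_monomial, aeval_algebraMap_apply]

theorem aevalAeval_equivMvPolynomial_symm (a b : A) (F : MvPolynomial (Fin 2) R) :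
    ((Bivariate.equivMvPolynomial R).symm F).aevalAeval a b = MvPolynomial.aeval ![a, b] F := by
  suffices (aevalAeval a b).comp (Bivariate.equivMvPolynomial R).symm.toAlgHom =
      MvPolynomial.aeval ![a, b] from
    DFunLike.congr_fun this F
  ext i
  fin_cases i <;> simp

theorem map_swap_equivMvPolynomial_symm_eq_finSuccEquiv (F : MvPolynomial (Fin 2) R) :
    (Bivariate.swap ((Bivariate.equivMvPolynomial R).symm F)).map
        (MvPolynomial.uniqueAlgEquiv R (Fin 1)).symm.toRingHom =
      MvPolynomial.finSuccEquiv R 1 F := by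
  suffices (mapAlgHom (MvPolynomial.uniqueAlgEquiv R (Fin 1)).symm.toAlgHom).comp
      (Bivariate.swap.toAlgHom.comp (Bivariate.equivMvPolynomial R).symm.toAlgHom) =
        (MvPolynomial.finSuccEquiv R 1).toAlgHom from
    DFunLike.congr_fun this F
  ext i : 1
  fin_cases i
  · simp [MvPolynomial.finSuccEquiv_X_zero, Bivariate.swap_X]
  · simpa [Bivariate.swap_Y, MvPolynomial.uniqueAlgEquiv] using
      (MvPolynomial.finSuccEquiv_X_succ (R := R) (j := (0 : Fin 1))).symm

theorem natDegree_swap_equivMvPolynomial_symm (F : MvPolynomial (Fin 2) R) :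
    (Bivariate.swap ((Bivariate.equivMvPolynomial R).symm F)).natDegree = F.degreeOf 0 := by
  rw [← MvPolynomial.natDegree_finSuccEquiv, ← map_swap_equivMvPolynomial_symm_eq_finSuccEquiv,
    natDegree_map_eq_of_injective (MvPolynomial.uniqueAlgEquiv R (Fin 1)).symm.injective]

theorem equivMvPolynomial_symm_rename_swap (F : MvPolynomial (Fin 2) R) :
    (Bivariate.equivMvPolynomial R).symm (MvPolynomial.rename (Equiv.swap 0 1) F) =
      Bivariate.swap ((Bivariate.equivMvPolynomial R).symm F) := by
  suffices (Bivariate.equivMvPolynomial R).symm.toAlgHom.comp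
      (MvPolynomial.rename (Equiv.swap 0 1)) =
        Bivariate.swap.toAlgHom.comp (Bivariate.equivMvPolynomial R).symm.toAlgHom from
    DFunLike.congr_fun this F
  ext i : 1
  fin_cases i <;> simp [Bivariate.swap_X, Bivariate.swap_Y]

theorem natDegree_equivMvPolynomial_symm (F : MvPolynomial (Fin 2) R) :
    ((Bivariate.equivMvPolynomial R).symm F).natDegree = F.degreeOf 1 := by
  rw [← Bivariate.swap_swap_apply ((Bivariate.equivMvPolynomial R).symm F),
    ← equivMvPolynomial_symm_rename_swap, natDegree_swap_equivMvPolynomial_symm]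
  simpa using MvPolynomial.degreeOf_rename_of_injective (Equiv.swap (0 : Fin 2) 1).injective 1

end Bivariate

section AlgebraicRelation

variable {R A : Type*} [CommRing R] [CommRing A] [Algebra R A] {a b : A} {G : R[X][Y]}

theorem natDegree_ne_zero_of_aevalAeval_eq_zero (ha : Transcendental R a) (hG : G ≠ 0)
    (hGab : G.aevalAeval a b = 0) : G.natDegree ≠ 0 := by
  intro hdeg
  obtain ⟨p, rfl⟩ := natDegree_eq_zero.mp hdeg
  rw [aevalAeval_C] at hGab
  exact hG (by rw [transcendental_iff.mp ha p hGab, C_0])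

theorem natDegree_eq_zero_of_aevalAeval_algebraMap_eq_zero [IsDomain R] {c : R}
    (hb : Transcendental R b) (hG : Irreducible G)
    (hGcb : G.aevalAeval (algebraMap R A c) b = 0) : G.natDegree = 0 := by
  have hmap : G.map (aeval c).toRingHom = 0 := by
    rw [aevalAeval_algebraMap_eq_aeval_map_aeval] at hGcb
    exact transcendental_iff.mp hb _ hGcb
  have hdvd : C (X - C c) ∣ G := by
    refine (C_dvd_iff_dvd_coeff _ _).mpr fun i ↦ dvd_iff_isRoot.mpr ?_
    simpa [coe_aeval_eq_eval] using congr_arg (coeff · i) hmap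
  have hassoc : Associated (C (X - C c)) G :=
    (prime_C_iff.mpr (prime_X_sub_C c)).irreducible.associated_of_dvd hG hdvd
  rw [← natDegree_eq_of_degree_eq (degree_eq_degree_of_associated hassoc), natDegree_C]

end AlgebraicRelation

section FieldExtension

variable {K L : Type*} [Field K] [Field L] [Algebra K L] {f g : L}

theorem finrank_adjoin_simple_eq_natDegree {P : K[X]} (hP : Irreducible P)
    (hPg : aeval g P = 0) : Module.finrank K K⟮g⟯ = P.natDegree := by
  have hint : IsIntegral K g := IsAlgebraic.isIntegral ⟨P, hP.ne_zero, hPg⟩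
  rw [adjoin.finrank hint]
  exact natDegree_eq_of_degree_eq <| degree_eq_degree_of_associated <|
    (minpoly.irreducible hint).associated_of_dvd hP (minpoly.dvd K g hPg)

theorem irreducible_map_aeval_gen {G : K[X][Y]} (hf : Transcendental K f) (hG : Irreducible G)
    (hdeg : G.natDegree ≠ 0) :
    Irreducible (G.map (aeval (AdjoinSimple.gen K f)).toRingHom) := by
  have hirr : Irreducible (G.map (algebraMap K[X] (RatFunc K))) :=
    (hG.isPrimitive hdeg).irreducible_iff_irreducible_map_fraction_map.mp hG
  convert hirr.map (mapAlgEquiv (RatFunc.algEquivOfTranscendental f hf))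
  rw [coe_mapAlgEquiv, Polynomial.map_map]
  congr 1
  refine RingHom.ext fun p ↦ ?_
  exact (RatFunc.algEquivOfTranscendental_algebraMap f hf p).symm

theorem finrank_adjoin_adjoin_eq_natDegree {G : K[X][Y]} (hf : Transcendental K f)
    (hG : Irreducible G) (hGfg : G.aevalAeval f g = 0) :
    Module.finrank K⟮f⟯ K⟮f⟯⟮g⟯ = G.natDegree := by
  have hroot : aeval g (G.map (aeval (AdjoinSimple.gen K f)).toRingHom) = 0 := by
    rw [← aevalAeval_algebraMap_eq_aeval_map_aeval, AdjoinSimple.algebraMap_gen, hGfg]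
  have hirr := irreducible_map_aeval_gen hf hG
    (natDegree_ne_zero_of_aevalAeval_eq_zero hf hG.ne_zero hGfg)
  have hgen : Transcendental K (AdjoinSimple.gen K f) :=
    (transcendental_algebraMap_iff (algebraMap K⟮f⟯ L).injective).mp hf
  rw [finrank_adjoin_simple_eq_natDegree hirr hroot,
    natDegree_map_eq_of_injective (transcendental_iff_injective.mp hgen)]

theorem natDegree_mul_finrank_adjoin_pair {G : K[X][Y]} (hf : Transcendental K f)
    (hG : Irreducible G) (hGfg : G.aevalAeval f g = 0) :
    G.natDegree * Module.finrank K⟮f, g⟯ L = Module.finrank K⟮f⟯ L := by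
  rw [← finrank_adjoin_adjoin_eq_natDegree hf hG hGfg, ← adjoin_simple_adjoin_simple]
  exact Module.finrank_mul_finrank K⟮f⟯ K⟮f⟯⟮g⟯ L

theorem top_ne_bot_of_transcendental (hf : Transcendental K f) :
    (⊤ : IntermediateField K L) ≠ ⊥ := by
  intro htop
  obtain ⟨c, rfl⟩ := mem_bot.mp (htop ▸ mem_top : f ∈ (⊥ : IntermediateField K L))
  exact hf (isAlgebraic_algebraMap c)

end FieldExtension

section RatFunc

variable {K : Type*} [Field K]

theorem finrank_adjoin_div_eq_max_natDegree {u v : K[X]} (hv : v ≠ 0) (huv : IsCoprime u v) :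
    Module.finrank K⟮(algebraMap K[X] (RatFunc K) u / algebraMap K[X] (RatFunc K) v)⟯ (RatFunc K) =
      max u.natDegree v.natDegree := by
  set f := algebraMap K[X] (RatFunc K) u / algebraMap K[X] (RatFunc K) v with hf
  have hcross : f.num * v = u * f.denom := (RatFunc.num_mul_eq_mul_denom_iff hv).mpr hf
  have hnum : Associated f.num u := associated_of_dvd_dvd (RatFunc.num_div_dvd u hv)
    (huv.dvd_of_dvd_mul_right (hcross ▸ dvd_mul_right u f.denom))
  have hdenom : Associated f.denom v := associated_of_dvd_dvd (RatFunc.denom_div_dvd u v)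
    (huv.symm.dvd_of_dvd_mul_left (hcross ▸ dvd_mul_left v f.num))
  rw [RatFunc.finrank_eq_max_natDegree,
    natDegree_eq_of_degree_eq (degree_eq_degree_of_associated hnum),
    natDegree_eq_of_degree_eq (degree_eq_degree_of_associated hdenom)]

theorem natDegree_mul_finrank_adjoin_pair_ratFunc {f g : RatFunc K} {G : K[X][Y]}
    (hG : Irreducible G) (hGfg : G.aevalAeval f g = 0) (hfg : K⟮f, g⟯ ≠ ⊥) :
    G.natDegree * Module.finrank K⟮f, g⟯ (RatFunc K) = Module.finrank K⟮f⟯ (RatFunc K) := by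
  by_cases hf : ∃ c, f = RatFunc.C c
  · obtain ⟨c, rfl⟩ := hf
    have hg : ¬∃ d, g = RatFunc.C d := by
      rintro ⟨d, rfl⟩
      refine hfg (adjoin_eq_bot_iff.mpr ?_)
      rintro x (rfl | rfl)
      exacts [⟨c, rfl⟩, ⟨d, rfl⟩]
    rw [natDegree_eq_zero_of_aevalAeval_algebraMap_eq_zero (g.transcendental_of_ne_C hg) hG hGfg,
      zero_mul, RatFunc.finrank_eq_max_natDegree]
    simp
  · exact natDegree_mul_finrank_adjoin_pair (f.transcendental_of_ne_C hf) hG hGfg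

theorem degree_of_implicit_equation_general {u₁ v₁ u₂ v₂ : K[X]} {f₁ f₂ : RatFunc K}
    (hf₁ : f₁ = algebraMap K[X] (RatFunc K) u₁ / algebraMap K[X] (RatFunc K) v₁)
    (hf₂ : f₂ = algebraMap K[X] (RatFunc K) u₂ / algebraMap K[X] (RatFunc K) v₂)
    (hv₁ : v₁ ≠ 0) (hv₂ : v₂ ≠ 0) (hcop₁ : IsCoprime u₁ v₁) (hcop₂ : IsCoprime u₂ v₂)
    {F : MvPolynomial (Fin 2) K} (hF : Irreducible F)
    (hvanish : MvPolynomial.aeval ![f₁, f₂] F = 0) (hnonconst : K⟮f₁, f₂⟯ ≠ ⊥) :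
    F.degreeOf 1 * Module.finrank K⟮f₁, f₂⟯ (RatFunc K) = max u₁.natDegree v₁.natDegree ∧
      F.degreeOf 0 * Module.finrank K⟮f₁, f₂⟯ (RatFunc K) = max u₂.natDegree v₂.natDegree := by
  have hG : Irreducible ((Bivariate.equivMvPolynomial K).symm F) := hF.map _
  have hGf : ((Bivariate.equivMvPolynomial K).symm F).aevalAeval f₁ f₂ = 0 := by
    rw [aevalAeval_equivMvPolynomial_symm, hvanish]
  rw [← finrank_adjoin_div_eq_max_natDegree hv₁ hcop₁, ← hf₁,
    ← finrank_adjoin_div_eq_max_natDegree hv₂ hcop₂, ← hf₂]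
  constructor
  · rw [← natDegree_equivMvPolynomial_symm]
    exact natDegree_mul_finrank_adjoin_pair_ratFunc hG hGf hnonconst
  · rw [← natDegree_swap_equivMvPolynomial_symm]
    rw [Set.pair_comm] at hnonconst ⊢
    exact natDegree_mul_finrank_adjoin_pair_ratFunc (hG.map Bivariate.swap)
      (by rw [Bivariate.aevalAeval_swap, hGf]) hnonconst

end RatFunc

/-- **Theorem 1 (degree of the implicit equation).**
If `(u1/v1, u2/v2)` is a proper rational parametrization in lowest terms of the
irreducible curve defined by `F`, then `deg_y F = max(deg u1, deg v1)` and
`deg_x F = max(deg u2, deg v2)`. -/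
theorem degree_of_implicit_equation
    (K : Type*) [Field K]
    (u1 v1 u2 v2 : Polynomial K)
    (hv1 : v1 ≠ 0) (hv2 : v2 ≠ 0)
    (hcop1 : IsCoprime u1 v1) (hcop2 : IsCoprime u2 v2)
    (F : MvPolynomial (Fin 2) K) (hF : Irreducible F)
    (hvanish :
      MvPolynomial.aeval
        ![algebraMap (Polynomial K) (RatFunc K) u1 / algebraMap (Polynomial K) (RatFunc K) v1,
          algebraMap (Polynomial K) (RatFunc K) u2 / algebraMap (Polynomial K) (RatFunc K) v2]
        F = 0)
    (hproper :
      IntermediateField.adjoin K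
        ({algebraMap (Polynomial K) (RatFunc K) u1 / algebraMap (Polynomial K) (RatFunc K) v1,
          algebraMap (Polynomial K) (RatFunc K) u2 / algebraMap (Polynomial K) (RatFunc K) v2} :
          Set (RatFunc K)) = ⊤) :
    MvPolynomial.degreeOf 1 F = max u1.natDegree v1.natDegree ∧
    MvPolynomial.degreeOf 0 F = max u2.natDegree v2.natDegree := by
  simpa only [IntermediateField.finrank_eq_one_iff_eq_top.mpr hproper, mul_one] using
    degree_of_implicit_equation_general rfl rfl hv1 hv2 hcop1 hcop2 hF hvanish
      (hproper ▸ top_ne_bot_of_transcendental RatFunc.transcendental_X)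
end

section
/- Let K be a field and let u1, v1, u2, v2 ∈ K[t] be polynomials with v1 ≠ 0, v2 ≠ 0, gcd(u1, v1) = 1, gcd(u2, v2) = 1, max(deg u1, deg v1) ≥ 1 and max(deg u2, deg v2) ≥ 1. Let F ∈ K[x,y] be an irreducible bivariate polynomial such that F(u1(t)/v1(t), u2(t)/v2(t)) = 0 in K(t), and suppose the parametrization is proper, i.e., the subfield of K(t) generated over K by u1/v1 and u2/v2 is all of K(t). Then the resultant with respect to t of the polynomials u1(t) − x·v1(t) and u2(t) − y·v2(t), regarded as polynomials in t with coefficients in the ring K[x,y], equals c·F(x,y) for some nonzero constant c ∈ K. -/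
open Polynomial

/-- The Sylvester matrix of two polynomials `p` and `q` over a commutative ring,
where `p` is regarded as a polynomial of degree (at most) `n` and `q` as a
polynomial of degree (at most) `m`.  It has `m` rows built from the coefficients
of `p` and `n` rows built from the coefficients of `q`. -/
def sylvesterMatrix {R : Type*} [CommRing R] (n m : ℕ) (p q : Polynomial R) :
    Matrix (Fin (m + n)) (Fin (m + n)) R :=
  Matrix.of fun r j =>
    if (r : ℕ) < m then
      -- a row `(0,…,0, a_n, a_{n-1}, …, a_0, 0, …, 0)` of coefficients of `p`
      (if (r : ℕ) ≤ (j : ℕ) ∧ (j : ℕ) ≤ (r : ℕ) + n then p.coeff (n + r - j) else 0)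
    else
      -- a row `(0,…,0, b_m, b_{m-1}, …, b_0, 0, …, 0)` of coefficients of `q`
      (if (r : ℕ) - m ≤ (j : ℕ) ∧ (j : ℕ) ≤ ((r : ℕ) - m) + m then
        q.coeff (m + ((r : ℕ) - m) - j) else 0)

/-- The resultant of `p` (of degree `n`) and `q` (of degree `m`): the determinant
of their Sylvester matrix. -/
def resultant {R : Type*} [CommRing R] (n m : ℕ) (p q : Polynomial R) : R :=
  (sylvesterMatrix n m p q).det

/-!
Write `x = u₁ / v₁`, `y = u₂ / v₂`, `n = max (deg u₁) (deg v₁)`, `m = max (deg u₂) (deg v₂)`, and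
let `R` be the resultant. It is nonzero, and it vanishes at `(x, y)` because `t` is a common root of
`u₁ - x v₁` and `u₂ - y v₂`; since `y` is transcendental, Gauss's lemma gives `F ∣ R`. The Sylvester
matrix shows `deg_x R ≤ m` and `deg_y R ≤ n`. As the parametrization is proper, `K(t) = K(y)(x)`, so
`deg_x F ≥ [K(t) : K(y)] = m`, and likewise `deg_y F ≥ [K(t) : K(x)] = n`. Hence `R / F` is
constant.
-/

section Determinants

variable {R ι : Type*} [CommRing R] [Fintype ι] [DecidableEq ι]

lemma associated_det_submatrix_perm (M : Matrix ι ι R) (e f : Equiv.Perm ι) :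
    Associated (M.submatrix e f).det M.det := by
  have isUnit_sign (g : Equiv.Perm ι) : IsUnit ((Equiv.Perm.sign g : ℤ) : R) :=
    (Equiv.Perm.sign g).isUnit.map (Int.castRingHom R)
  have hdet : (M.submatrix e f).det =
      (Equiv.Perm.sign f : ℤ) * ((Equiv.Perm.sign e : ℤ) * M.det) := by
    rw [← Matrix.det_permute, ← Matrix.det_permute', Matrix.submatrix_submatrix]
    rfl
  rw [hdet]
  exact (associated_unit_mul_left _ _ (isUnit_sign f)).trans
    (associated_unit_mul_left _ _ (isUnit_sign e))

lemma degreeOf_det_le {σ : Type*} (k : σ) (M : Matrix ι ι (MvPolynomial σ R)) (w : ι → ℕ)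
    (hw : ∀ i j, (M i j).degreeOf k ≤ w j) : M.det.degreeOf k ≤ ∑ j, w j := by
  have degreeOf_prod (τ : Equiv.Perm ι) : (∏ j, M (τ j) j).degreeOf k ≤ ∑ j, w j :=
    (MvPolynomial.degreeOf_prod_le _ _ _).trans (Finset.sum_le_sum fun j _ => hw _ j)
  rw [Matrix.det_apply]
  refine (MvPolynomial.degreeOf_sum_le _ _ _).trans (Finset.sup_le fun τ _ => ?_)
  rcases Int.units_eq_one_or (Equiv.Perm.sign τ) with hτ | hτ <;>
    simpa [hτ] using degreeOf_prod τ

end Determinants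

section Resultants

variable {R : Type*} [CommRing R]

/-- The permutation of `Fin (m + n)` that reverses the first `m` and the last `n` indices
separately. It accounts for Mathlib listing the coefficients of a Sylvester matrix in increasing
order, where `sylvesterMatrix` lists them in decreasing order. -/
def blockRevPerm (m n : ℕ) : Equiv.Perm (Fin (m + n)) :=
  finSumFinEquiv.permCongr (Equiv.sumCongr Fin.revPerm Fin.revPerm)

lemma blockRevPerm_castAdd (m n : ℕ) (r : Fin m) :
    blockRevPerm m n (Fin.castAdd n r) = Fin.castAdd n r.rev := by
  simp [blockRevPerm, Equiv.permCongr_apply]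

lemma blockRevPerm_natAdd (m n : ℕ) (r : Fin n) :
    blockRevPerm m n (Fin.natAdd m r) = Fin.natAdd m r.rev := by
  simp [blockRevPerm, Equiv.permCongr_apply]

lemma sylvesterMatrix_eq_submatrix (n m : ℕ) (p q : R[X]) :
    sylvesterMatrix n m p q =
      (sylvester q p m n).transpose.submatrix (blockRevPerm m n) Fin.revPerm := by
  ext r j
  have hj := j.isLt
  induction r using Fin.addCases with
  | left r =>
    have hr := r.isLt
    simp only [sylvesterMatrix, sylvester, Matrix.of_apply, Matrix.submatrix_apply,
      Matrix.transpose_apply, blockRevPerm_castAdd, Fin.revPerm_apply, Fin.addCases_left,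
      Fin.val_castAdd, Fin.val_rev, Set.mem_Icc, hr, if_true]
    congr 1
    · grind
    · congr 1; lia
  | right r =>
    have hr := r.isLt
    simp only [sylvesterMatrix, sylvester, Matrix.of_apply, Matrix.submatrix_apply,
      Matrix.transpose_apply, blockRevPerm_natAdd, Fin.revPerm_apply, Fin.addCases_right,
      Fin.val_natAdd, Fin.val_rev, Set.mem_Icc, Nat.not_lt.2 (Nat.le_add_right m _), if_false,
      Nat.add_sub_cancel_left]
    congr 1
    · grind
    · congr 1; lia

lemma associated_resultant (n m : ℕ) (p q : R[X]) :
    Associated (_root_.resultant n m p q) (Polynomial.resultant p q n m) := by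
  have hcomm : Polynomial.resultant q p m n = (-1) ^ (m * n) * Polynomial.resultant p q n m :=
    resultant_comm q p m n
  have hdet : Associated (_root_.resultant n m p q) (Polynomial.resultant q p m n) := by
    rw [_root_.resultant, sylvesterMatrix_eq_submatrix, Polynomial.resultant,
      ← Matrix.det_transpose (sylvester q p m n)]
    exact associated_det_submatrix_perm _ _ _
  rw [hcomm] at hdet
  exact hdet.trans (associated_unit_mul_left _ _ (isUnit_one.neg.pow _))

lemma degreeOf_resultant_le {σ : Type*} (k : σ) {f g : (MvPolynomial σ R)[X]} {a b : ℕ}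
    (hf : ∀ d, (f.coeff d).degreeOf k ≤ a) (hg : ∀ d, (g.coeff d).degreeOf k ≤ b) (m n : ℕ) :
    (Polynomial.resultant f g m n).degreeOf k ≤ m * b + n * a := by
  refine (degreeOf_det_le k _ (Fin.addCases (fun _ => b) fun _ => a) fun i j => ?_).trans_eq
    (by simp [Fin.sum_univ_add])
  induction j using Fin.addCases <;>
    simp only [sylvester, Matrix.of_apply, Fin.addCases_left, Fin.addCases_right] <;>
    split_ifs <;> simp [hf, hg]

lemma map_resultant_eq_zero_of_eval₂_eq_zero {S : Type*} [CommRing S] (φ : R →+* S) (s : S)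
    {f g : R[X]} {m n : ℕ} (hf : f.natDegree ≤ m) (hg : g.natDegree ≤ n) (hmn : m ≠ 0 ∨ n ≠ 0)
    (hfs : f.eval₂ φ s = 0) (hgs : g.eval₂ φ s = 0) :
    φ (Polynomial.resultant f g m n) = 0 := by
  obtain ⟨p, q, -, -, hpq⟩ := exists_mul_add_mul_eq_C_resultant f g hf hg hmn
  simpa [eval₂_add, eval₂_mul, hfs, hgs] using (congrArg (eval₂ φ s) hpq).symm

end Resultants

section Pencil

/-- The member `u - a v` of the pencil spanned by `u` and `v`, with parameter `a` in an algebra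
over the coefficient ring. Its roots are the `t` with `u(t) / v(t) = a`; taking `a` to be a
variable `x` gives the polynomial `u(t) - x v(t)` of the implicitization problem. -/
noncomputable def pencil {R A : Type*} [CommRing R] [CommRing A] [Algebra R A] (a : A)
    (u v : R[X]) : A[X] :=
  u.map (algebraMap R A) - C a * v.map (algebraMap R A)

section CommRing

variable {R A B : Type*} [CommRing R] [CommRing A] [Algebra R A] [CommRing B] [Algebra R B]

lemma coeff_pencil (a : A) (u v : R[X]) (d : ℕ) :
    (pencil a u v).coeff d = algebraMap R A (u.coeff d) - a * algebraMap R A (v.coeff d) := by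
  simp [pencil]

lemma natDegree_pencil_le (a : A) (u v : R[X]) :
    (pencil a u v).natDegree ≤ max u.natDegree v.natDegree :=
  (natDegree_sub_le _ _).trans
    (max_le_max natDegree_map_le ((natDegree_C_mul_le _ _).trans natDegree_map_le))

lemma map_pencil (φ : A →ₐ[R] B) (a : A) (u v : R[X]) :
    (pencil a u v).map (φ : A →+* B) = pencil (φ a) u v := by
  ext d
  simp [coeff_pencil]

lemma aeval_pencil [Algebra A B] [IsScalarTower R A B] (a : A) (u v : R[X]) (t : B) :
    aeval t (pencil a u v) = aeval t u - algebraMap A B a * aeval t v := by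
  simp [pencil]

lemma eval₂_pencil (φ : A →ₐ[R] B) (a : A) (u v : R[X]) (t : B) :
    (pencil a u v).eval₂ (φ : A →+* B) t = aeval t u - φ a * aeval t v := by
  rw [← eval_map, map_pencil, ← coe_aeval_eq_eval, aeval_pencil, Algebra.algebraMap_self_apply]

lemma degreeOf_coeff_pencil_le {σ : Type*} (k : σ) (a : MvPolynomial σ R) (u v : R[X]) (d : ℕ) :
    ((pencil a u v).coeff d).degreeOf k ≤ a.degreeOf k := by
  rw [coeff_pencil, MvPolynomial.algebraMap_eq]
  exact (MvPolynomial.degreeOf_sub_le _ _ _).trans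
    (max_le (by simp) (MvPolynomial.degreeOf_mul_C_le _ _ _))

lemma coeff_pencil_ne_zero {a : A} (ha : Transcendental R a) {u v : R[X]} {d : ℕ}
    (huv : u.coeff d ≠ 0 ∨ v.coeff d ≠ 0) : (pencil a u v).coeff d ≠ 0 := by
  intro hcoeff
  rw [coeff_pencil, mul_comm] at hcoeff
  have hlin : C (u.coeff d) - C (v.coeff d) * X = 0 :=
    transcendental_iff.1 ha _ (by simpa using hcoeff)
  have hu : u.coeff d = 0 := by simpa using congrArg (coeff · 0) hlin
  have hv : v.coeff d = 0 := by simpa using congrArg (coeff · 1) hlin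
  exact huv.elim (· hu) (· hv)

lemma coeff_max_natDegree_ne_zero {u v : R[X]} (huv : u ≠ 0 ∨ v ≠ 0) :
    u.coeff (max u.natDegree v.natDegree) ≠ 0 ∨ v.coeff (max u.natDegree v.natDegree) ≠ 0 := by
  rcases lt_trichotomy u.natDegree v.natDegree with hlt | heq | hlt
  · right
    rw [max_eq_right hlt.le, coeff_natDegree, leadingCoeff_ne_zero]
    exact ne_zero_of_natDegree_gt hlt
  · rw [heq, max_self, coeff_natDegree, ← heq, coeff_natDegree]
    simpa using huv
  · left
    rw [max_eq_left hlt.le, coeff_natDegree, leadingCoeff_ne_zero]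
    exact ne_zero_of_natDegree_gt hlt

lemma natDegree_pencil {a : A} (ha : Transcendental R a) {u v : R[X]} (huv : u ≠ 0 ∨ v ≠ 0) :
    (pencil a u v).natDegree = max u.natDegree v.natDegree :=
  (natDegree_pencil_le a u v).antisymm
    (le_natDegree_of_ne_zero (coeff_pencil_ne_zero ha (coeff_max_natDegree_ne_zero huv)))

lemma degreeOf_resultant_pencil_le {σ : Type*} (k : σ) (a b : MvPolynomial σ R)
    (u₁ v₁ u₂ v₂ : R[X]) (n m : ℕ) :
    (Polynomial.resultant (pencil a u₁ v₁) (pencil b u₂ v₂) n m).degreeOf k ≤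
      n * b.degreeOf k + m * a.degreeOf k :=
  degreeOf_resultant_le k (degreeOf_coeff_pencil_le k a u₁ v₁) (degreeOf_coeff_pencil_le k b u₂ v₂)
    n m

end CommRing

/-- The resultant `Res_t(u₁(t) - xᵢ v₁(t), u₂(t) - xⱼ v₂(t))`, where the two polynomials in `t` are
given their generic degrees `max (deg u₁) (deg v₁)` and `max (deg u₂) (deg v₂)`. It is the candidate
for the implicit equation of the curve `(u₁ / v₁, u₂ / v₂)`. -/
noncomputable def implicitResultant {σ R : Type*} [CommRing R] (i j : σ) (u₁ v₁ u₂ v₂ : R[X]) :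
    MvPolynomial σ R :=
  Polynomial.resultant (pencil (MvPolynomial.X i) u₁ v₁) (pencil (MvPolynomial.X j) u₂ v₂)
    (max u₁.natDegree v₁.natDegree) (max u₂.natDegree v₂.natDegree)

section CommRing

variable {σ R A : Type*} [CommRing R] [CommRing A] [Algebra R A] {i j : σ}

lemma degreeOf_left_implicitResultant_le [Nontrivial R] (hij : i ≠ j) (u₁ v₁ u₂ v₂ : R[X]) :
    (implicitResultant i j u₁ v₁ u₂ v₂).degreeOf i ≤ max u₂.natDegree v₂.natDegree := by
  refine (degreeOf_resultant_pencil_le i _ _ u₁ v₁ u₂ v₂ _ _).trans_eq ?_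
  rw [MvPolynomial.degreeOf_X_of_ne hij, MvPolynomial.degreeOf_X_self, mul_zero, zero_add, mul_one]

lemma degreeOf_right_implicitResultant_le [Nontrivial R] (hij : i ≠ j) (u₁ v₁ u₂ v₂ : R[X]) :
    (implicitResultant i j u₁ v₁ u₂ v₂).degreeOf j ≤ max u₁.natDegree v₁.natDegree := by
  refine (degreeOf_resultant_pencil_le j _ _ u₁ v₁ u₂ v₂ _ _).trans_eq ?_
  rw [MvPolynomial.degreeOf_X_of_ne hij.symm, MvPolynomial.degreeOf_X_self, mul_zero, add_zero,
    mul_one]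

lemma aeval_implicitResultant_eq_zero {a : σ → A} {u₁ v₁ u₂ v₂ : R[X]} (t : A)
    (hi : a i * aeval t v₁ = aeval t u₁) (hj : a j * aeval t v₂ = aeval t u₂)
    (hdeg : max u₁.natDegree v₁.natDegree ≠ 0 ∨ max u₂.natDegree v₂.natDegree ≠ 0) :
    MvPolynomial.aeval a (implicitResultant i j u₁ v₁ u₂ v₂) = 0 := by
  refine map_resultant_eq_zero_of_eval₂_eq_zero
    (MvPolynomial.aeval (R := R) a : MvPolynomial σ R →+* A) t
    (natDegree_pencil_le _ u₁ v₁) (natDegree_pencil_le _ u₂ v₂) hdeg ?_ ?_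
  · rw [eval₂_pencil, MvPolynomial.aeval_X, hi, sub_self]
  · rw [eval₂_pencil, MvPolynomial.aeval_X, hj, sub_self]

end CommRing

section Field

variable {K L : Type*} [Field K] [Field L] [Algebra K L]

lemma isCoprime_pencil_map {a : L} (ha : Transcendental K a) {u v w : K[X]}
    (huv : IsCoprime u v) (hw : w ≠ 0) :
    IsCoprime (pencil a u v) (w.map (algebraMap K L)) := by
  rw [isCoprime_iff_aeval_ne_zero_of_isAlgClosed L (AlgebraicClosure L)]
  intro β
  by_contra! ⟨hpencil, hwβ⟩
  rw [aeval_map_algebraMap] at hwβ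
  rw [aeval_pencil, sub_eq_zero] at hpencil
  have hvβ : aeval β v ≠ 0 := fun hvβ =>
    (aeval_ne_zero_of_isCoprime huv β).elim (· (by rw [hpencil, hvβ, mul_zero])) (· hvβ)
  have hβ : IsAlgebraic K β := ⟨w, hw, hwβ⟩
  have isAlgebraic_aeval (f : K[X]) : IsAlgebraic K (aeval β f) :=
    not_not.1 fun h => (transcendental_aeval_iff.1 h).1 hβ
  have ha_alg : IsAlgebraic K (algebraMap L (AlgebraicClosure L) a) := by
    rw [eq_div_of_mul_eq hvβ hpencil.symm, div_eq_mul_inv]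
    exact (isAlgebraic_aeval u).mul (isAlgebraic_aeval v).inv
  exact ha ((isAlgebraic_algebraMap_iff (algebraMap L (AlgebraicClosure L)).injective).1 ha_alg)

lemma resultant_pencil_map_ne_zero {a : L} (ha : Transcendental K a) {u v w : K[X]}
    (huv : IsCoprime u v) (hw : w ≠ 0) {m : ℕ} (hm : w.natDegree ≤ m) :
    Polynomial.resultant (pencil a u v) (w.map (algebraMap K L))
      (max u.natDegree v.natDegree) m ≠ 0 := by
  have hne : u ≠ 0 ∨ v ≠ 0 := huv.ne_zero_or_ne_zero
  obtain ⟨k, rfl⟩ := Nat.exists_eq_add_of_le hm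
  have hres : Polynomial.resultant (pencil a u v) (w.map (algebraMap K L))
      (max u.natDegree v.natDegree) w.natDegree ≠ 0 := by
    simpa only [natDegree_pencil ha hne, natDegree_map] using
      resultant_ne_zero _ _ (isCoprime_pencil_map ha huv hw)
  rw [resultant_add_right_deg _ _ _ _ _ natDegree_map_le]
  exact mul_ne_zero
    (pow_ne_zero _ (coeff_pencil_ne_zero ha (coeff_max_natDegree_ne_zero hne))) hres

-- Specialising `X j` to `0` and `X i` to a transcendental leaves a nonzero resultant.
lemma implicitResultant_ne_zero {σ : Type*} {i j : σ} (hij : i ≠ j) {u₁ v₁ u₂ : K[X]} (v₂ : K[X])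
    (huv₁ : IsCoprime u₁ v₁) (hu₂ : u₂ ≠ 0) : implicitResultant i j u₁ v₁ u₂ v₂ ≠ 0 := by
  classical
  let φ : MvPolynomial σ K →ₐ[K] RatFunc K := MvPolynomial.aeval (Pi.single i RatFunc.X)
  have hi : φ (MvPolynomial.X i) = RatFunc.X := by simp [φ]
  have hj : φ (MvPolynomial.X j) = 0 := by simp [φ, hij.symm]
  have pencil_zero : pencil (0 : RatFunc K) u₂ v₂ = u₂.map (algebraMap K (RatFunc K)) := by
    simp [pencil]
  refine ne_zero_of_map (f := (φ : MvPolynomial σ K →+* RatFunc K)) ?_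
  rw [implicitResultant, ← resultant_map_map, map_pencil, map_pencil, hi, hj, pencil_zero]
  exact resultant_pencil_map_ne_zero RatFunc.transcendental_X huv₁ hu₂ (le_max_left _ _)

end Field

end Pencil

section Divisibility

lemma dvd_of_irreducible_of_eval₂_eq_zero {A L : Type*} [CommRing A] [IsDomain A] [IsGCDMonoid A]
    [Field L] {φ : A →+* L} (hφ : Function.Injective φ) {x : L} {f g : A[X]} (hf : Irreducible f)
    (hfx : f.eval₂ φ x = 0) (hgx : g.eval₂ φ x = 0) : f ∣ g := by
  have hdeg : f.natDegree ≠ 0 := by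
    intro hdeg
    rw [eq_C_of_natDegree_eq_zero hdeg, eval₂_C, map_eq_zero_iff φ hφ] at hfx
    exact hf.ne_zero (by rw [eq_C_of_natDegree_eq_zero hdeg, hfx, C_0])
  have hprim : f.IsPrimitive := hf.isPrimitive hdeg
  let ψ : FractionRing A →+* L := IsFractionRing.lift hφ
  have hψ : ψ.comp (algebraMap A (FractionRing A)) = φ :=
    RingHom.ext (IsFractionRing.lift_algebraMap hφ)
  refine hprim.dvd_of_fraction_map_dvd_fraction_map (K := FractionRing A) ?_
  by_contra hndvd
  obtain ⟨a, b, hab⟩ :=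
    (hprim.irreducible_iff_irreducible_map_fraction_map.1 hf).coprime_iff_not_dvd.2 hndvd
  simpa [eval₂_add, eval₂_mul, eval₂_map, hψ, hfx, hgx] using congrArg (eval₂ ψ x) hab

lemma associated_of_dvd_of_degreeOf_le {σ K : Type*} [Field K] {F G : MvPolynomial σ K}
    (hdvd : F ∣ G) (hG : G ≠ 0) (hdeg : ∀ i, G.degreeOf i ≤ F.degreeOf i) : Associated F G := by
  obtain ⟨H, rfl⟩ := hdvd
  obtain ⟨hF, hH⟩ := mul_ne_zero_iff.1 hG
  have hH_deg (i : σ) : H.degreeOf i = 0 := by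
    have := hdeg i
    rw [MvPolynomial.degreeOf_mul_eq hF hH] at this
    lia
  have hH_total : H.totalDegree = 0 := (MvPolynomial.totalDegree_eq_zero_iff _ _).2 fun s hs i =>
    Nat.eq_zero_of_le_zero ((MvPolynomial.monomial_le_degreeOf i hs).trans_eq (hH_deg i))
  have hH_unit : IsUnit H := MvPolynomial.isUnit_iff_totalDegree_of_isReduced.2 ⟨by
    rw [MvPolynomial.totalDegree_eq_zero_iff_eq_C.1 hH_total] at hH
    simpa using hH, hH_total⟩
  exact (associated_mul_unit_left F H hH_unit).symm

end Divisibility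

section IsolateVariable

variable {σ : Type*}

/-- A polynomial in the variables `σ` viewed as a univariate polynomial in the variable `i`, with
coefficients in the polynomial ring in the remaining variables. -/
noncomputable def isolateVariable [DecidableEq σ] (R : Type*) [CommRing R] (i : σ) :
    MvPolynomial σ R ≃ₐ[R] (MvPolynomial {j // j ≠ i} R)[X] :=
  (MvPolynomial.renameEquiv R (Equiv.optionSubtypeNe i).symm).trans
    (MvPolynomial.optionEquivLeft R _)

lemma natDegree_isolateVariable [DecidableEq σ] {R : Type*} [CommRing R] (i : σ)
    (F : MvPolynomial σ R) :
    (isolateVariable R i F).natDegree = F.degreeOf i :=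
  (MvPolynomial.degreeOf_eq_natDegree i F).symm

lemma eval₂_isolateVariable [DecidableEq σ] {R A : Type*} [CommRing R] [CommRing A] [Algebra R A]
    (i : σ) (a : σ → A) (F : MvPolynomial σ R) :
    (isolateVariable R i F).eval₂
      (MvPolynomial.aeval (R := R) fun j : {j // j ≠ i} => a j : _ →+* A) (a i) =
      MvPolynomial.aeval a F := by
  induction F using MvPolynomial.induction_on with
  | C r => simp [isolateVariable]
  | add p q hp hq => simp only [map_add, eval₂_add, hp, hq]
  | mul_X p j hp =>
    rw [map_mul, map_mul, eval₂_mul, hp]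
    congr 1
    by_cases hij : j = i
    · subst hij
      simp [isolateVariable, MvPolynomial.optionEquivLeft_X_none]
    · simp [isolateVariable, MvPolynomial.optionEquivLeft_X_some, hij]

variable {K L : Type*} [Field K] [Field L] [Algebra K L] {i : σ} {a : σ → L}

lemma dvd_of_irreducible_of_aeval_eq_zero
    (ha : AlgebraicIndependent K fun j : {j // j ≠ i} => a j) {F G : MvPolynomial σ K}
    (hF : Irreducible F) (hFa : MvPolynomial.aeval a F = 0) (hGa : MvPolynomial.aeval a G = 0) :
    F ∣ G := by
  classical
  rw [← map_dvd_iff (isolateVariable K i)]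
  rw [← eval₂_isolateVariable i] at hFa hGa
  exact dvd_of_irreducible_of_eval₂_eq_zero ha ((MulEquiv.irreducible_iff _).2 hF) hFa hGa

open IntermediateField in
lemma finrank_le_natDegree_of_aeval_eq_zero {x : L} (htop : K⟮x⟯ = ⊤) {f : K[X]} (hf : f ≠ 0)
    (hfx : aeval x f = 0) : Module.finrank K L ≤ f.natDegree := by
  rw [← finrank_top', ← htop, adjoin.finrank (isAlgebraic_iff_isIntegral.1 ⟨f, hf, hfx⟩)]
  exact natDegree_le_of_dvd (minpoly.dvd _ _ hfx) hf

open IntermediateField in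
lemma finrank_adjoin_le_degreeOf
    (ha : AlgebraicIndependent K fun j : {j // j ≠ i} => a j) (htop : adjoin K (Set.range a) = ⊤)
    {F : MvPolynomial σ K} (hF : F ≠ 0) (hFa : MvPolynomial.aeval a F = 0) :
    Module.finrank (adjoin K (Set.range fun j : {j // j ≠ i} => a j)) L ≤ F.degreeOf i := by
  classical
  set E := adjoin K (Set.range fun j : {j // j ≠ i} => a j)
  let b : {j // j ≠ i} → E := fun j => ⟨a j, subset_adjoin K _ ⟨j, rfl⟩⟩
  let φ : MvPolynomial {j // j ≠ i} K →+* E := (MvPolynomial.aeval (R := K) b : _ →+* E)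
  have hφ_inj : Function.Injective φ := AlgebraicIndependent.of_comp E.val ha
  have hφ_comp : (algebraMap E L).comp φ =
      (MvPolynomial.aeval (R := K) fun j : {j // j ≠ i} => a j : _ →+* L) := by
    apply MvPolynomial.ringHom_ext <;> intro <;> simp [φ, b]
  have hE_top : adjoin E {a i} = ⊤ := by
    have hrange : Set.range a ⊆ (Set.range fun j : {j // j ≠ i} => a j) ∪ {a i} := by
      rintro _ ⟨j, rfl⟩
      by_cases hj : j = i
      · exact .inr (congrArg a hj)
      · exact .inl ⟨⟨j, hj⟩, rfl⟩
    rw [← restrictScalars_eq_top_iff (K := K), adjoin_adjoin_left]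
    exact top_unique (htop.ge.trans (adjoin.mono K _ _ hrange))
  rw [← natDegree_isolateVariable, ← natDegree_map_eq_of_injective hφ_inj]
  refine finrank_le_natDegree_of_aeval_eq_zero hE_top
    ((Polynomial.map_ne_zero_iff hφ_inj).2 (by simpa using hF)) ?_
  rw [aeval_def, eval₂_map, hφ_comp, eval₂_isolateVariable, hFa]

end IsolateVariable

section TwoVariables

variable {K L : Type*} [Field K] [Field L] [Algebra K L] {a : Fin 2 → L} {i j : Fin 2}

lemma fin_two_eq_of_ne_of_ne (hij : i ≠ j) {k : Fin 2} (hk : k ≠ i) : k = j := by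
  lia

lemma algebraicIndependent_ne_of_transcendental (hij : i ≠ j) (ha : Transcendental K (a j)) :
    AlgebraicIndependent K fun k : {k // k ≠ i} => a k := by
  have : Subsingleton {k : Fin 2 // k ≠ i} :=
    ⟨fun k l => Subtype.ext ((fin_two_eq_of_ne_of_ne hij k.2).trans
      (fin_two_eq_of_ne_of_ne hij l.2).symm)⟩
  exact (algebraicIndependent_singleton_iff ⟨j, hij.symm⟩).2 ha

open IntermediateField in
lemma finrank_adjoin_simple_le_degreeOf (hij : i ≠ j) (ha : Transcendental K (a j))
    (htop : adjoin K (Set.range a) = ⊤) {F : MvPolynomial (Fin 2) K} (hF : F ≠ 0)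
    (hFa : MvPolynomial.aeval a F = 0) : Module.finrank K⟮a j⟯ L ≤ F.degreeOf i := by
  have hrange : Set.range (fun k : {k // k ≠ i} => a k) = {a j} := by
    refine Set.eq_singleton_iff_unique_mem.2 ⟨⟨⟨j, hij.symm⟩, rfl⟩, ?_⟩
    rintro _ ⟨k, rfl⟩
    exact congrArg a (fin_two_eq_of_ne_of_ne hij k.2)
  exact hrange ▸
    finrank_adjoin_le_degreeOf (algebraicIndependent_ne_of_transcendental hij ha) htop hF hFa

open IntermediateField in
lemma associated_of_degreeOf_le_finrank (ha : ∀ j, Transcendental K (a j))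
    (htop : adjoin K (Set.range a) = ⊤) {F G : MvPolynomial (Fin 2) K} (hF : Irreducible F)
    (hFa : MvPolynomial.aeval a F = 0) (hG : G ≠ 0) (hGa : MvPolynomial.aeval a G = 0)
    (hdeg₀ : G.degreeOf 0 ≤ Module.finrank K⟮a 1⟯ L)
    (hdeg₁ : G.degreeOf 1 ≤ Module.finrank K⟮a 0⟯ L) : Associated F G := by
  have hdvd : F ∣ G := dvd_of_irreducible_of_aeval_eq_zero
    (algebraicIndependent_ne_of_transcendental zero_ne_one (ha 1)) hF hFa hGa
  refine associated_of_dvd_of_degreeOf_le hdvd hG (Fin.forall_fin_two.2 ⟨?_, ?_⟩)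
  · exact hdeg₀.trans
      (finrank_adjoin_simple_le_degreeOf zero_ne_one (ha 1) htop hF.ne_zero hFa)
  · exact hdeg₁.trans
      (finrank_adjoin_simple_le_degreeOf one_ne_zero (ha 0) htop hF.ne_zero hFa)

end TwoVariables

section RationalFunctions

variable {K : Type*} [Field K] {u v : K[X]}

lemma num_div_mul_eq_mul_denom_div (u : K[X]) (hv : v ≠ 0) :
    (algebraMap K[X] (RatFunc K) u / algebraMap K[X] (RatFunc K) v).num * v =
      u * (algebraMap K[X] (RatFunc K) u / algebraMap K[X] (RatFunc K) v).denom :=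
  (RatFunc.num_mul_eq_mul_denom_iff hv).2 rfl

lemma associated_num_div (hv : v ≠ 0) (huv : IsCoprime u v) :
    Associated (algebraMap K[X] (RatFunc K) u / algebraMap K[X] (RatFunc K) v).num u :=
  associated_of_dvd_dvd
    ((RatFunc.isCoprime_num_denom _).dvd_of_dvd_mul_right
      (Dvd.intro v (num_div_mul_eq_mul_denom_div u hv)))
    (huv.dvd_of_dvd_mul_right (Dvd.intro _ (num_div_mul_eq_mul_denom_div u hv).symm))

lemma associated_denom_div (hv : v ≠ 0) (huv : IsCoprime u v) :
    Associated (algebraMap K[X] (RatFunc K) u / algebraMap K[X] (RatFunc K) v).denom v :=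
  associated_of_dvd_dvd
    ((RatFunc.isCoprime_num_denom _).symm.dvd_of_dvd_mul_left
      (Dvd.intro_left u (num_div_mul_eq_mul_denom_div u hv).symm))
    (huv.symm.dvd_of_dvd_mul_left (Dvd.intro_left _ (num_div_mul_eq_mul_denom_div u hv)))

open IntermediateField in
lemma finrank_adjoin_simple_div (hv : v ≠ 0) (huv : IsCoprime u v) :
    Module.finrank K⟮algebraMap K[X] (RatFunc K) u / algebraMap K[X] (RatFunc K) v⟯ (RatFunc K) =
      max u.natDegree v.natDegree := by
  rw [RatFunc.finrank_eq_max_natDegree,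
    natDegree_eq_of_degree_eq (degree_eq_degree_of_associated (associated_num_div hv huv)),
    natDegree_eq_of_degree_eq (degree_eq_degree_of_associated (associated_denom_div hv huv))]

lemma transcendental_div (hv : v ≠ 0) (huv : IsCoprime u v)
    (hdeg : 1 ≤ max u.natDegree v.natDegree) :
    Transcendental K (algebraMap K[X] (RatFunc K) u / algebraMap K[X] (RatFunc K) v) := by
  refine RatFunc.transcendental_of_ne_C _ ?_
  rintro ⟨c, hc⟩
  rw [← finrank_adjoin_simple_div hv huv, RatFunc.finrank_eq_max_natDegree, hc] at hdeg
  simp at hdeg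

lemma div_mul_aeval_X (u : K[X]) (hv : v ≠ 0) :
    algebraMap K[X] (RatFunc K) u / algebraMap K[X] (RatFunc K) v * aeval RatFunc.X v =
      aeval RatFunc.X u := by
  simp [RatFunc.aeval_X_left_eq_algebraMap, hv]

end RationalFunctions

/-- **Theorem 2 (implicitization by resultants).**
If `(u1/v1, u2/v2)` is a proper rational parametrization in lowest terms of the
irreducible curve defined by `F`, then
`Res_t (u1(t) - x·v1(t), u2(t) - y·v2(t)) = c · F(x,y)` for some nonzero `c ∈ K`. -/
theorem resultant_eq_implicit_equation
    (K : Type*) [Field K]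
    (u1 v1 u2 v2 : Polynomial K)
    (hv1 : v1 ≠ 0) (hv2 : v2 ≠ 0)
    (hcop1 : IsCoprime u1 v1) (hcop2 : IsCoprime u2 v2)
    (hn : 1 ≤ max u1.natDegree v1.natDegree)
    (hm : 1 ≤ max u2.natDegree v2.natDegree)
    (F : MvPolynomial (Fin 2) K) (hF : Irreducible F)
    (hvanish :
      MvPolynomial.aeval
        ![algebraMap (Polynomial K) (RatFunc K) u1 / algebraMap (Polynomial K) (RatFunc K) v1,
          algebraMap (Polynomial K) (RatFunc K) u2 / algebraMap (Polynomial K) (RatFunc K) v2]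
        F = 0)
    (hproper :
      IntermediateField.adjoin K
        ({algebraMap (Polynomial K) (RatFunc K) u1 / algebraMap (Polynomial K) (RatFunc K) v1,
          algebraMap (Polynomial K) (RatFunc K) u2 / algebraMap (Polynomial K) (RatFunc K) v2} :
          Set (RatFunc K)) = ⊤) :
    ∃ c : K, c ≠ 0 ∧
      resultant (max u1.natDegree v1.natDegree) (max u2.natDegree v2.natDegree)
        (u1.map (algebraMap K (MvPolynomial (Fin 2) K)) -
          Polynomial.C (MvPolynomial.X 0) * v1.map (algebraMap K (MvPolynomial (Fin 2) K)))
        (u2.map (algebraMap K (MvPolynomial (Fin 2) K)) -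
          Polynomial.C (MvPolynomial.X 1) * v2.map (algebraMap K (MvPolynomial (Fin 2) K)))
      = MvPolynomial.C c * F := by
  set x := algebraMap K[X] (RatFunc K) u1 / algebraMap K[X] (RatFunc K) v1
  set y := algebraMap K[X] (RatFunc K) u2 / algebraMap K[X] (RatFunc K) v2
  have hx : Transcendental K x := transcendental_div hv1 hcop1 hn
  have hy : Transcendental K y := transcendental_div hv2 hcop2 hm
  have htop : IntermediateField.adjoin K (Set.range ![x, y]) = ⊤ := by
    rwa [Matrix.range_cons_cons_empty]
  have hu2 : u2 ≠ 0 := by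
    rintro rfl
    exact hy (by simpa [y] using isAlgebraic_zero)
  have hvanish_res : MvPolynomial.aeval ![x, y] (implicitResultant 0 1 u1 v1 u2 v2) = 0 :=
    aeval_implicitResultant_eq_zero RatFunc.X (div_mul_aeval_X u1 hv1) (div_mul_aeval_X u2 hv2)
      (.inl (Nat.one_le_iff_ne_zero.1 hn))
  have hassoc : Associated F (implicitResultant 0 1 u1 v1 u2 v2) :=
    associated_of_degreeOf_le_finrank (Fin.forall_fin_two.2 ⟨hx, hy⟩) htop hF hvanish
      (implicitResultant_ne_zero zero_ne_one v2 hcop1 hu2) hvanish_res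
      ((degreeOf_left_implicitResultant_le zero_ne_one u1 v1 u2 v2).trans_eq
        (finrank_adjoin_simple_div hv2 hcop2).symm)
      ((degreeOf_right_implicitResultant_le zero_ne_one u1 v1 u2 v2).trans_eq
        (finrank_adjoin_simple_div hv1 hcop1).symm)
  obtain ⟨w, hw⟩ := hassoc.trans (associated_resultant _ _ _ _).symm
  obtain ⟨c, hc, hcw⟩ := MvPolynomial.isUnit_iff_eq_C_of_isReduced.1 w.isUnit
  exact ⟨c, hc.ne_zero, hw.symm.trans (by rw [hcw, mul_comm])⟩
end

section
/- Let K be an infinite field and let u1, v1, u2, v2 ∈ K[t] be polynomials with v1 ≠ 0, v2 ≠ 0, gcd(u1, v1) = 1, gcd(u2, v2) = 1, and such that the rational function u1/v1 ∈ K(t) is not a constant. Let F ∈ K[x,y] be an irreducible bivariate polynomial with deg_x F = m and deg_y F = n such that F(u1/v1, u2/v2) = 0 in K(t). If G ∈ K[x,y] satisfies deg_x G ≤ m, deg_y G ≤ n and G(u1/v1, u2/v2) = 0 in K(t), then G = c·F for some constant c ∈ K. -/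
/-!
If all coordinates of a point `x` except the `i`-th are algebraically independent over `R`, then the
ideal of relations of `x`, viewed in `R[X_j : j ≠ i][X_i]`, contains no nonzero constant. Extended
to polynomials over the fraction field of `R[X_j : j ≠ i]` it stays proper, so it is generated
there by any irreducible relation `F`, and by Gauss's lemma `F` already divides every relation `G`
over `R`. Since degrees in each variable add under multiplication, the degree bounds force the
cofactor to be a constant. A nonconstant rational function is transcendental, so for a parametrized
plane curve the first coordinate alone is algebraically independent.
-/

section Gauss

open Polynomial nonZeroDivisors

variable {R : Type*} [CommRing R]

theorem map_mapRingHom_ne_top_of_comap_C_eq_bot (K : Type*) [CommRing K] [Algebra R K]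
    [IsFractionRing R K] [Nontrivial R] {I : Ideal R[X]} (hI : I.comap C = ⊥) :
    I.map (mapRingHom (algebraMap R K)) ≠ ⊤ := by
  let _ : Algebra R[X] K[X] := Polynomial.algebra R K
  have : IsLocalization (R⁰.map C) K[X] := Polynomial.isLocalization R⁰ K
  change I.map (algebraMap R[X] K[X]) ≠ ⊤
  rw [IsLocalization.map_algebraMap_ne_top_iff_disjoint (R⁰.map C), Set.disjoint_left]
  rintro _ ⟨r, hr, rfl⟩ hrI
  have hr0 : r = 0 := by simpa [hI] using Ideal.mem_comap.2 hrI
  exact nonZeroDivisors.ne_zero hr hr0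

theorem dvd_of_irreducible_of_mem_of_comap_C_eq_bot [IsDomain R] [IsGCDMonoid R]
    {I : Ideal R[X]} (hI : I.comap C = ⊥) {F G : R[X]} (hF : Irreducible F) (hFI : F ∈ I)
    (hGI : G ∈ I) : F ∣ G := by
  have hdeg : F.natDegree ≠ 0 := by
    intro hdeg
    obtain ⟨r, rfl⟩ := natDegree_eq_zero.1 hdeg
    have hr : r = 0 := by simpa [hI] using Ideal.mem_comap.2 hFI
    exact hF.ne_zero (by rw [hr, C_0])
  have hprim : F.IsPrimitive := hF.isPrimitive hdeg
  have hirr : Irreducible (F.map (algebraMap R (FractionRing R))) :=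
    hprim.irreducible_iff_irreducible_map_fraction_map.1 hF
  refine hprim.dvd_of_fraction_map_dvd_fraction_map (K := FractionRing R) ?_
  by_contra hndvd
  obtain ⟨a, b, hab⟩ := hirr.coprime_iff_not_dvd.2 hndvd
  refine map_mapRingHom_ne_top_of_comap_C_eq_bot (FractionRing R) hI
    ((Ideal.eq_top_iff_one _).2 ?_)
  rw [← hab]
  exact add_mem (Ideal.mul_mem_left _ a (Ideal.mem_map_of_mem _ hFI))
    (Ideal.mul_mem_left _ b (Ideal.mem_map_of_mem _ hGI))

end Gauss

section Relations

open MvPolynomial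

variable {σ R A : Type*} [CommRing R] [CommRing A] [Algebra R A]

theorem dvd_of_irreducible_of_aeval_eq_zero_s3 [IsDomain R] [UniqueFactorizationMonoid R]
    {x : σ → A} {i : σ} (hx : AlgebraicIndependent R fun j : {j // j ≠ i} ↦ x j)
    {F G : MvPolynomial σ R} (hF : Irreducible F) (hFx : aeval x F = 0) (hGx : aeval x G = 0) :
    F ∣ G := by
  classical
  let e : Polynomial (MvPolynomial {j // j ≠ i} R) ≃ₐ[R] MvPolynomial σ R :=
    (optionEquivLeft R {j // j ≠ i}).symm.trans (renameEquiv R (Equiv.optionSubtypeNe i))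
  let ψ : Polynomial (MvPolynomial {j // j ≠ i} R) →ₐ[R] A := (aeval x).comp e
  have hψC (p : MvPolynomial {j // j ≠ i} R) :
      ψ (Polynomial.C p) = aeval (fun j : {j // j ≠ i} ↦ x j) p := by
    induction p using MvPolynomial.induction_on <;> simp_all [ψ, e]
  have hker : (RingHom.ker ψ).comap Polynomial.C = ⊥ := by
    ext p
    simpa [hψC] using map_eq_zero_iff (aeval fun j : {j // j ≠ i} ↦ x j) hx
  rw [← map_dvd_iff e.symm]
  refine dvd_of_irreducible_of_mem_of_comap_C_eq_bot hker
    ((MulEquiv.irreducible_iff e.symm).2 hF) ?_ ?_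
  · simpa [ψ] using hFx
  · simpa [ψ] using hGx

theorem exists_eq_C_mul_of_dvd_of_degreeOf_le {S : Type*} [CommSemiring S] [NoZeroDivisors S]
    {F G : MvPolynomial σ S} (hdvd : F ∣ G) (hdeg : ∀ i, degreeOf i G ≤ degreeOf i F) :
    ∃ c : S, G = C c * F := by
  obtain ⟨H, rfl⟩ := hdvd
  by_cases hFH : F * H = 0
  · exact ⟨0, by simp [hFH]⟩
  have ⟨hF, hH⟩ := ne_zero_and_ne_zero_of_mul hFH
  have hvars : H.vars = ∅ := by
    refine Finset.eq_empty_of_forall_notMem fun i hi ↦ mem_vars_iff_degreeOf_ne_zero.1 hi ?_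
    have hle : degreeOf i F + degreeOf i H ≤ degreeOf i F := degreeOf_mul_eq hF hH ▸ hdeg i
    lia
  exact ⟨H.coeff 0, by rw [← vars_eq_empty_iff_eq_C.1 hvars, mul_comm]⟩

theorem algebraicIndependent_subtype_ne_one_iff {x : Fin 2 → A} :
    AlgebraicIndependent R (fun j : {j : Fin 2 // j ≠ 1} ↦ x j) ↔ Transcendental R (x 0) :=
  have : Subsingleton {j : Fin 2 // j ≠ 1} := ⟨by decide⟩
  algebraicIndependent_singleton_iff (⟨0, zero_ne_one⟩ : {j : Fin 2 // j ≠ 1})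

theorem implicit_equation_unique_up_to_constant_general [IsDomain R] [UniqueFactorizationMonoid R]
    {x : σ → A} {i : σ} (hx : AlgebraicIndependent R fun j : {j // j ≠ i} ↦ x j)
    {F G : MvPolynomial σ R} (hF : Irreducible F) (hFx : aeval x F = 0) (hGx : aeval x G = 0)
    (hdeg : ∀ j, degreeOf j G ≤ degreeOf j F) : ∃ c : R, G = C c * F :=
  exists_eq_C_mul_of_dvd_of_degreeOf_le (dvd_of_irreducible_of_aeval_eq_zero_s3 hx hF hFx hGx) hdeg

end Relations

/-- **Uniqueness of the implicit equation in `Π_{m,n}`.**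
Over an infinite field, if `F` is an irreducible polynomial with `deg_x F = m`,
`deg_y F = n` vanishing on the (nonconstant) parametrization `(u1/v1, u2/v2)`,
then any `G` with `deg_x G ≤ m`, `deg_y G ≤ n` vanishing on the parametrization
is a constant multiple of `F`. -/
theorem implicit_equation_unique_up_to_constant
    (K : Type*) [Field K] [Infinite K]
    (u1 v1 u2 v2 : Polynomial K)
    (hv1 : v1 ≠ 0) (hv2 : v2 ≠ 0)
    (hcop1 : IsCoprime u1 v1) (hcop2 : IsCoprime u2 v2)
    (hnonconst : ∀ c : K,
      algebraMap (Polynomial K) (RatFunc K) u1 / algebraMap (Polynomial K) (RatFunc K) v1 ≠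
        algebraMap K (RatFunc K) c)
    (F : MvPolynomial (Fin 2) K) (hF : Irreducible F)
    (m n : ℕ)
    (hFx : MvPolynomial.degreeOf 0 F = m) (hFy : MvPolynomial.degreeOf 1 F = n)
    (hFvanish :
      MvPolynomial.aeval
        ![algebraMap (Polynomial K) (RatFunc K) u1 / algebraMap (Polynomial K) (RatFunc K) v1,
          algebraMap (Polynomial K) (RatFunc K) u2 / algebraMap (Polynomial K) (RatFunc K) v2]
        F = 0)
    (G : MvPolynomial (Fin 2) K)
    (hGx : MvPolynomial.degreeOf 0 G ≤ m) (hGy : MvPolynomial.degreeOf 1 G ≤ n)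
    (hGvanish :
      MvPolynomial.aeval
        ![algebraMap (Polynomial K) (RatFunc K) u1 / algebraMap (Polynomial K) (RatFunc K) v1,
          algebraMap (Polynomial K) (RatFunc K) u2 / algebraMap (Polynomial K) (RatFunc K) v2]
        G = 0) :
    ∃ c : K, G = MvPolynomial.C c * F := by
  have htrans := RatFunc.transcendental_of_ne_C _ fun ⟨c, hc⟩ ↦ hnonconst c hc
  exact implicit_equation_unique_up_to_constant_general
    (algebraicIndependent_subtype_ne_one_iff.2 htrans) hF hFvanish hGvanish
    (Fin.forall_fin_two.2 ⟨hGx.trans_eq hFx.symm, hGy.trans_eq hFy.symm⟩)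
end

section
/- Let K be a field and let F, G ∈ K[x,y] be nonzero bivariate polynomials having no common non-unit factor (i.e., every common divisor of F and G in K[x,y] is a unit). Then the set of common zeros {(a,b) ∈ K × K : F(a,b) = 0 and G(a,b) = 0} is finite. -/
/-!
By Gauss's lemma, polynomials over a GCD domain `R` without a common factor stay coprime over the
fraction field, where Bézout's identity holds; clearing denominators, the ideal they generate in
`R[X]` contains a nonzero constant. Viewing `F` and `G` as polynomials in one of the two variables,
the ideal `(F, G)` thus contains a nonzero polynomial in the other variable alone. Each coordinate
of a common zero is therefore a root of a fixed nonzero univariate polynomial.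
-/

section Univariate

open Polynomial

variable {R : Type*} [CommRing R] [IsDomain R] [IsGCDMonoid R]

lemma exists_isPrimitive_associated_map_algebraMap {K : Type*} [Field K] [Algebra R K]
    [IsFractionRing R K] {f : K[X]} (hf : f ≠ 0) :
    ∃ g : R[X], g.IsPrimitive ∧ Associated (g.map (algebraMap R K)) f := by
  let : NormalizedGCDMonoid R := Nonempty.some inferInstance
  have isUnit_C_algebraMap {c : R} (hc : c ≠ 0) : IsUnit (C (algebraMap R K c)) :=
    isUnit_C.2 (IsUnit.mk0 _ (by simpa using hc))
  obtain ⟨b, hb, map_n⟩ := IsLocalization.integerNormalization_spec (nonZeroDivisors R) f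
  set n : R[X] := IsLocalization.integerNormalization (nonZeroDivisors R) f
  have hn : n ≠ 0 := mt IsFractionRing.integerNormalization_eq_zero_iff.1 hf
  have unit_b := isUnit_C_algebraMap (nonZeroDivisors.ne_zero hb)
  have unit_content := isUnit_C_algebraMap (mt content_eq_zero_iff.1 hn)
  have content_mul_eq : C (algebraMap R K n.content) * n.primPart.map (algebraMap R K) =
      C (algebraMap R K b) * f := by
    rw [← map_C, ← Polynomial.map_mul, ← eq_C_content_mul_primPart, map_n, Algebra.smul_def,
      Polynomial.algebraMap_apply]
  refine ⟨n.primPart, n.isPrimitive_primPart, ?_⟩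
  rw [← associated_isUnit_mul_left_iff unit_content, content_mul_eq]
  exact associated_unit_mul_left f _ unit_b

lemma isRelPrime_map_algebraMap_of_isRelPrime (K : Type*) [Field K] [Algebra R K]
    [IsFractionRing R K] {p q : R[X]} (hpq : IsRelPrime p q) :
    IsRelPrime (p.map (algebraMap R K)) (q.map (algebraMap R K)) := by
  intro d hdp hdq
  have hd : d ≠ 0 := by
    rintro rfl
    have map_eq_zero {f : R[X]} (hf : 0 ∣ f.map (algebraMap R K)) : f = 0 :=
      (Polynomial.map_eq_zero_iff (FaithfulSMul.algebraMap_injective R K)).1 (zero_dvd_iff.1 hf)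
    exact hpq.ne_zero_or_ne_zero.elim (· (map_eq_zero hdp)) (· (map_eq_zero hdq))
  obtain ⟨g, hg, hgd⟩ := exists_isPrimitive_associated_map_algebraMap (R := R) hd
  have g_dvd {f : R[X]} (hdf : d ∣ f.map (algebraMap R K)) : g ∣ f :=
    hg.dvd_of_fraction_map_dvd_fraction_map (hgd.dvd.trans hdf)
  have unit_g : IsUnit g := hpq (g_dvd hdp) (g_dvd hdq)
  exact hgd.isUnit (unit_g.map (mapRingHom (algebraMap R K)))

attribute [local instance] Polynomial.algebra Polynomial.isLocalization in
lemma exists_C_mem_span_pair_of_isRelPrime {p q : R[X]} (hpq : IsRelPrime p q) :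
    ∃ r : R, r ≠ 0 ∧ C r ∈ Ideal.span {p, q} := by
  let K := FractionRing R
  have hcop : IsCoprime (p.map (algebraMap R K)) (q.map (algebraMap R K)) :=
    (isRelPrime_map_algebraMap_of_isRelPrime K hpq).isCoprime
  have map_span_eq_top : (Ideal.span {p, q}).map (algebraMap R[X] K[X]) = ⊤ := by
    rw [Ideal.map_span, Set.image_pair, Ideal.span_insert]
    exact (Ideal.sup_eq_top_iff_isCoprime _ _).2 hcop
  have not_disjoint : ¬Disjoint ((nonZeroDivisors R).map C : Set R[X]) (Ideal.span {p, q}) :=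
    fun hdisj ↦ (IsLocalization.map_algebraMap_ne_top_iff_disjoint ((nonZeroDivisors R).map C)
      K[X] _).2 hdisj map_span_eq_top
  obtain ⟨_, ⟨r, hr, rfl⟩, hmem⟩ := Set.not_disjoint_iff.1 not_disjoint
  exact ⟨r, nonZeroDivisors.ne_zero hr, hmem⟩

end Univariate

section Bivariate

open MvPolynomial

variable {R : Type*} [CommRing R]

/-- The identification of `R[X₀, X₁]` with `R[Xⱼ][Xᵢ]`, where `i` is the index other than `j`,
which turns eliminating `Xᵢ` into a statement about univariate polynomials over `R[Xⱼ]`. -/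
noncomputable def bivariateAlgEquiv (R : Type*) [CommRing R] (j : Fin 2) :
    MvPolynomial (Fin 2) R ≃ₐ[R] Polynomial (Polynomial R) :=
  (renameEquiv R (Equiv.swap 1 j)).trans <|
    (finSuccEquiv R 1).trans (Polynomial.mapAlgEquiv (uniqueAlgEquiv R (Fin 1)))

lemma bivariateAlgEquiv_aeval_X (j : Fin 2) (r : Polynomial R) :
    bivariateAlgEquiv R j (Polynomial.aeval (X j) r) = Polynomial.C r := by
  have image_X : bivariateAlgEquiv R j (X j) = Polynomial.C Polynomial.X := by
    simpa [bivariateAlgEquiv] using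
      congrArg (Polynomial.map (uniqueAlgEquiv R (Fin 1)).toRingHom) (finSuccEquiv_X_succ (j := 0))
  have aeval_C_X : Polynomial.aeval (Polynomial.C Polynomial.X) = Polynomial.CAlgHom (R := R) := by
    ext; simp
  rw [← Polynomial.aeval_algHom_apply, image_X, aeval_C_X]
  rfl

variable [IsDomain R] [IsGCDMonoid R]

lemma exists_aeval_X_mem_span_pair_of_isRelPrime {F G : MvPolynomial (Fin 2) R}
    (hFG : IsRelPrime F G) (j : Fin 2) :
    ∃ r : Polynomial R, r ≠ 0 ∧ Polynomial.aeval (X j) r ∈ Ideal.span {F, G} := by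
  let e := bivariateAlgEquiv R j
  have hmap : IsRelPrime (e F) (e G) := IsRelPrime.of_map e.symm (by simpa using hFG)
  obtain ⟨r, hr, hmem⟩ := exists_C_mem_span_pair_of_isRelPrime hmap
  refine ⟨r, hr, ?_⟩
  rw [← Set.image_pair, ← Ideal.map_span, ← bivariateAlgEquiv_aeval_X j] at hmem
  obtain ⟨f, hf, hfe⟩ := (Ideal.mem_map_of_equiv e _).1 hmem
  exact e.injective hfe ▸ hf

variable {A : Type*} [CommRing A] [IsDomain A] [Algebra R A] [FaithfulSMul R A]

lemma finite_image_eval_common_zeros {F G : MvPolynomial (Fin 2) R} (hFG : IsRelPrime F G)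
    (j : Fin 2) :
    (Function.eval j '' {v : Fin 2 → A | aeval v F = 0 ∧ aeval v G = 0}).Finite := by
  obtain ⟨r, hr, hmem⟩ := exists_aeval_X_mem_span_pair_of_isRelPrime hFG j
  refine (r.rootSet_finite A).subset ?_
  rintro _ ⟨v, ⟨hF, hG⟩, rfl⟩
  have span_le_ker : Ideal.span {F, G} ≤ RingHom.ker (aeval (R := R) v) := by
    simp [Ideal.span_le, Set.pair_subset_iff, hF, hG]
  have root : aeval v (Polynomial.aeval (X j) r) = 0 := span_le_ker hmem
  rw [← Polynomial.aeval_algHom_apply, aeval_X] at root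
  exact (Polynomial.mem_rootSet_of_ne hr).2 root

theorem finite_common_zeros_of_no_common_factor_general {F G : MvPolynomial (Fin 2) R}
    (hFG : IsRelPrime F G) : {v : Fin 2 → A | aeval v F = 0 ∧ aeval v G = 0}.Finite :=
  Set.forall_finite_image_eval_iff.1 (finite_image_eval_common_zeros hFG)

end Bivariate

/-- **Bézout-type finiteness.**
Two nonzero bivariate polynomials over a field without a common non-unit factor
have only finitely many common zeros. -/
theorem finite_common_zeros_of_no_common_factor
    (K : Type*) [Field K]
    (F G : MvPolynomial (Fin 2) K) (hF : F ≠ 0) (hG : G ≠ 0)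
    (hnocommon : ∀ d : MvPolynomial (Fin 2) K, d ∣ F → d ∣ G → IsUnit d) :
    {p : K × K |
      MvPolynomial.eval ![p.1, p.2] F = 0 ∧ MvPolynomial.eval ![p.1, p.2] G = 0}.Finite :=
  (finite_common_zeros_of_no_common_factor_general (A := K) fun _ ↦ hnocommon _).preimage
    (finTwoArrowEquiv K).symm.injective.injOn
end

section
/- Let p1 and p2 be distinct prime numbers, let m, n be natural numbers, and set N = (m+1)(n+1). Consider the N × N matrix A over ℚ whose rows are indexed by k ∈ {0, 1, …, N−1} and whose columns are indexed by pairs (i, j) with 0 ≤ i ≤ m, 0 ≤ j ≤ n, with entry A[k, (i,j)] = (p1^k)^i · (p2^k)^j. Then A is invertible. -/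
section RelPrimePowers

variable {M : Type*} [CommMonoidWithZero M] [IsCancelMulZero M] [DecompositionMonoid M] {x y : M}

theorem le_of_pow_mul_pow_eq_of_isRelPrime (hxy : IsRelPrime x y) (hx : ¬IsUnit x)
    (hy : ¬IsUnit y) {a b c d : ℕ} (h : x ^ a * y ^ b = x ^ c * y ^ d) : a ≤ c := by
  have hx0 : x ≠ 0 := by
    rintro rfl
    exact hy (isRelPrime_zero_left.mp hxy)
  have hdvd : x ^ a ∣ x ^ c * y ^ d := h ▸ dvd_mul_right _ _
  exact (pow_dvd_pow_iff hx0 hx).mp (hxy.pow.dvd_of_dvd_mul_right hdvd)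

theorem injective_pow_mul_pow_of_isRelPrime (hxy : IsRelPrime x y) (hx : ¬IsUnit x)
    (hy : ¬IsUnit y) : Function.Injective fun c : ℕ × ℕ => x ^ c.1 * y ^ c.2 := by
  have fst_le {c d : ℕ × ℕ} (h : x ^ c.1 * y ^ c.2 = x ^ d.1 * y ^ d.2) : c.1 ≤ d.1 :=
    le_of_pow_mul_pow_eq_of_isRelPrime hxy hx hy h
  have snd_le {c d : ℕ × ℕ} (h : x ^ c.1 * y ^ c.2 = x ^ d.1 * y ^ d.2) : c.2 ≤ d.2 :=
    le_of_pow_mul_pow_eq_of_isRelPrime hxy.symm hy hx (by simpa only [mul_comm] using h)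
  intro c d h
  exact Prod.ext ((fst_le h).antisymm (fst_le h.symm)) ((snd_le h).antisymm (snd_le h.symm))

end RelPrimePowers

section Collocation

variable {R : Type*} [CommRing R] {N : ℕ}

/-- The collocation matrix of the bivariate monomials with exponents `c 0, …, c (N - 1)` at the
geometric nodes `(x ^ k, y ^ k)`. Rows are indexed by nodes and columns by monomials; the list `c`
fixes both the monomials and their order. -/
def geometricCollocation (x y : R) (c : Fin N → ℕ × ℕ) : Matrix (Fin N) (Fin N) R :=
  Matrix.of fun k l => (x ^ (k : ℕ)) ^ (c l).1 * (y ^ (k : ℕ)) ^ (c l).2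

theorem geometricCollocation_eq_transpose_vandermonde (x y : R) (c : Fin N → ℕ × ℕ) :
    geometricCollocation x y c =
      (Matrix.vandermonde fun l => x ^ (c l).1 * y ^ (c l).2).transpose := by
  ext k l
  simp only [geometricCollocation, Matrix.of_apply, Matrix.transpose_apply,
    Matrix.vandermonde_apply, mul_pow, pow_right_comm _ (k : ℕ)]

theorem det_geometricCollocation_ne_zero_iff [IsDomain R] {x y : R} {c : Fin N → ℕ × ℕ} :
    (geometricCollocation x y c).det ≠ 0 ↔
      Function.Injective fun l => x ^ (c l).1 * y ^ (c l).2 := by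
  rw [geometricCollocation_eq_transpose_vandermonde, Matrix.det_transpose,
    Matrix.det_vandermonde_ne_zero_iff]

end Collocation

theorem prime_power_collocation_matrix_invertible_general
    {R K : Type*} [CommSemiring R] [DecompositionMonoid R] [Field K]
    {f : R →+* K} (hf : Function.Injective f) {x y : R} (hxy : IsRelPrime x y)
    (hx : ¬IsUnit x) (hy : ¬IsUnit y) {N : ℕ} {c : Fin N → ℕ × ℕ} (hc : Function.Injective c) :
    IsUnit (geometricCollocation (f x) (f y) c).det := by
  have : IsCancelMulZero R := hf.isCancelMulZero f (map_zero f) (map_mul f)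
  rw [isUnit_iff_ne_zero, det_geometricCollocation_ne_zero_iff]
  simpa only [Function.comp_def, map_mul, map_pow] using
    hf.comp ((injective_pow_mul_pow_of_isRelPrime hxy hx hy).comp hc)

/-- **Nonsingularity of the collocation matrix at nodes `(p1^k, p2^k)`.**
For distinct primes `p1, p2`, the `N × N` matrix (`N = (m+1)(n+1)`) with entry
`(p1^k)^i * (p2^k)^j` in row `k` and column `(i,j)` is invertible over `ℚ`. -/
theorem prime_power_collocation_matrix_invertible
    (p1 p2 : ℕ) (hp1 : Nat.Prime p1) (hp2 : Nat.Prime p2) (hne : p1 ≠ p2)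
    (m n : ℕ) :
    IsUnit
      ((Matrix.of fun (k : Fin ((m + 1) * (n + 1))) (c : Fin (m + 1) × Fin (n + 1)) =>
          ((p1 : ℚ) ^ (k : ℕ)) ^ (c.1 : ℕ) * ((p2 : ℚ) ^ (k : ℕ)) ^ (c.2 : ℕ)).submatrix
        id finProdFinEquiv.symm).det := by
  have hcoprime : IsRelPrime p1 p2 :=
    Nat.coprime_iff_isRelPrime.mp ((Nat.coprime_primes hp1 hp2).mpr hne)
  have hexponents : Function.Injective fun l : Fin ((m + 1) * (n + 1)) =>
      (((finProdFinEquiv.symm l).1 : ℕ), ((finProdFinEquiv.symm l).2 : ℕ)) :=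
    (Fin.val_injective.prodMap Fin.val_injective).comp finProdFinEquiv.symm.injective
  exact prime_power_collocation_matrix_invertible_general (f := Nat.castRingHom ℚ)
    Nat.cast_injective hcoprime hp1.not_isUnit hp2.not_isUnit hexponents
end
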